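/- arXiv:0912.0223 — 2 statements merged into one kernel-verified Lean document; each statement's English description precedes it below -/
import Mathlib

section
/- (Main Theorem, Statement (A).) Let k ≥ 1, R > 0, and x ∈ E with ‖x‖ ≠ R. If α, β ∈ ℂ satisfy α + β = k, then ∫_{y ∈ S^k(R)} ω(x,y)^α dμH[k](y) = ∫_{y ∈ S^k(R)} ω(x,y)^β dμH[k](y) (integrals of ℂ-valued functions). -/
open MeasureTheory

/-!
The lines through `x` exchange the points of the sphere in pairs `y ↔ y'`, and
`ω(x, y) = |x y'| / |x y|` by the power of the point `x`. Hence `ω(x, y') = ω(x, y)⁻¹`. As `y ↦ y'`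
is an inversion centred at `x`, possibly followed by the reflection in `x`, it stretches lengths
near `y` by the factor `ω(x, y)`, hence `μH[k]` by `ω(x, y) ^ k`. Substituting `y'` for `y` thus
turns `ω ^ α` into `ω ^ (-α) * ω ^ k = ω ^ β`.

The change of variables needs no differentiation: on a set where `ω` varies by a factor of at most
`t`, the involution has a Lipschitz constant that is sharp up to `t`. Letting `t → 1` gives one
inequality between the two measures, and the involution carries it into the opposite one.
-/

open Set Filter Topology
open scoped NNReal ENNReal RealInnerProductSpace

section HausdorffImage

variable {X Y : Type*} [EMetricSpace X] [MeasurableSpace X] [BorelSpace X]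
  [EMetricSpace Y] [MeasurableSpace Y] [BorelSpace Y]
  {T : X → Y} {g : X → ℝ≥0} {A : Set X} {d : ℝ}

theorem hausdorffMeasure_image_le_mul_setLIntegral_of_mem_Icc (hA : MeasurableSet A) (hd : 0 ≤ d)
    {m t : ℝ≥0} (hgA : ∀ y ∈ A, g y ∈ Icc m (t * m))
    (hT : ∀ y ∈ A, ∀ z ∈ A, edist (T y) (T z) ≤ max (g y) (g z) * edist y z) :
    μH[d] (T '' A) ≤ (t ^ d : ℝ≥0) * ∫⁻ y in A, (g y ^ d : ℝ≥0) ∂μH[d] := by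
  have hLip : LipschitzOnWith (t * m) T A := fun y hy z hz ↦ (hT y hy z hz).trans <| by
    gcongr
    exact_mod_cast max_le (hgA y hy).2 (hgA z hz).2
  calc μH[d] (T '' A) ≤ ((t * m : ℝ≥0) : ℝ≥0∞) ^ d * μH[d] A := hLip.hausdorffMeasure_image_le hd
    _ = (t ^ d : ℝ≥0) * ∫⁻ _ in A, (m ^ d : ℝ≥0) ∂μH[d] := by
      rw [setLIntegral_const, ← mul_assoc, ← ENNReal.coe_mul, ← NNReal.mul_rpow,
        ENNReal.coe_rpow_of_nonneg _ hd]
    _ ≤ (t ^ d : ℝ≥0) * ∫⁻ y in A, (g y ^ d : ℝ≥0) ∂μH[d] := by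
      gcongr 1
      refine setLIntegral_mono' hA fun y hy ↦ ?_
      exact_mod_cast NNReal.rpow_le_rpow (hgA y hy).1 hd

theorem hausdorffMeasure_image_le_mul_setLIntegral (hA : MeasurableSet A) (hg : Measurable g)
    (hg₀ : ∀ y ∈ A, g y ≠ 0) (hd : 0 ≤ d)
    (hT : ∀ y ∈ A, ∀ z ∈ A, edist (T y) (T z) ≤ max (g y) (g z) * edist y z)
    {t : ℝ≥0} (ht : 1 < t) :
    μH[d] (T '' A) ≤ (t ^ d : ℝ≥0) * ∫⁻ y in A, (g y ^ d : ℝ≥0) ∂μH[d] := by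
  let B : ℤ → Set X := fun n ↦ A ∩ g ⁻¹' Ico (t ^ n) (t ^ (n + 1))
  have hB : ∀ n, MeasurableSet (B n) := fun n ↦ hA.inter (hg measurableSet_Ico)
  have hB_disjoint : Pairwise (Function.onFun Disjoint B) := fun m n hmn ↦
    (((zpow_right_mono₀ ht.le).pairwise_disjoint_on_Ico_succ hmn).preimage g).mono
      inter_subset_right inter_subset_right
  have hAB : A = ⋃ n, B n := by
    refine Subset.antisymm (fun y hy ↦ ?_) (iUnion_subset fun n ↦ inter_subset_left)
    obtain ⟨n, hn⟩ := NNReal.exists_mem_Ico_zpow (hg₀ y hy) ht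
    exact mem_iUnion.2 ⟨n, hy, hn⟩
  have hB_image (n : ℤ) :
      μH[d] (T '' B n) ≤ (t ^ d : ℝ≥0) * ∫⁻ y in B n, (g y ^ d : ℝ≥0) ∂μH[d] := by
    refine hausdorffMeasure_image_le_mul_setLIntegral_of_mem_Icc (hB n) hd (m := t ^ n)
      (fun y hy ↦ ⟨hy.2.1, ?_⟩) fun y hy z hz ↦ hT y hy.1 z hz.1
    rw [mul_comm, ← zpow_add_one₀ (zero_lt_one.trans ht).ne']
    exact hy.2.2.le
  calc μH[d] (T '' A) = μH[d] (⋃ n, T '' B n) := by rw [← image_iUnion, ← hAB]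
    _ ≤ ∑' n, μH[d] (T '' B n) := measure_iUnion_le _
    _ ≤ ∑' n, (t ^ d : ℝ≥0) * ∫⁻ y in B n, (g y ^ d : ℝ≥0) ∂μH[d] := ENNReal.tsum_le_tsum hB_image
    _ = (t ^ d : ℝ≥0) * ∫⁻ y in A, (g y ^ d : ℝ≥0) ∂μH[d] := by
      rw [ENNReal.tsum_mul_left, ← lintegral_iUnion hB hB_disjoint, ← hAB]

theorem hausdorffMeasure_image_le_setLIntegral (hA : MeasurableSet A) (hg : Measurable g)
    (hg₀ : ∀ y ∈ A, g y ≠ 0) (hd : 0 ≤ d)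
    (hT : ∀ y ∈ A, ∀ z ∈ A, edist (T y) (T z) ≤ max (g y) (g z) * edist y z) :
    μH[d] (T '' A) ≤ ∫⁻ y in A, (g y ^ d : ℝ≥0) ∂μH[d] := by
  set I := ∫⁻ y in A, (g y ^ d : ℝ≥0) ∂μH[d]
  rcases eq_or_ne I ∞ with hI | hI
  · exact hI ▸ le_top
  have hlim : Tendsto (fun t : ℝ≥0 ↦ ((t ^ d : ℝ≥0) : ℝ≥0∞) * I) (𝓝[>] 1) (𝓝 I) := by
    have h : Tendsto (fun t : ℝ≥0 ↦ t ^ d) (𝓝[>] 1) (𝓝 1) := by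
      simpa using ((NNReal.continuous_rpow_const hd).tendsto 1).mono_left nhdsWithin_le_nhds
    simpa using ENNReal.Tendsto.mul_const (ENNReal.tendsto_coe.2 h) (Or.inr hI)
  exact ge_of_tendsto hlim <| eventually_nhdsWithin_of_forall fun t ht ↦
    hausdorffMeasure_image_le_mul_setLIntegral hA hg hg₀ hd hT ht

end HausdorffImage

/-- `T` restricts to an involution of `S` that stretches lengths near `y` by the factor `g y`.
Only the upper bound on distances is recorded: applied at `T y`, it also gives the lower bound. -/
structure IsConformalInvolutionOn {X : Type*} [EMetricSpace X] (T : X → X) (g : X → ℝ≥0)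
    (S : Set X) : Prop where
  mapsTo : MapsTo T S S
  leftInvOn : LeftInvOn T T S
  factor_map_mul_factor : ∀ y ∈ S, g (T y) * g y = 1
  edist_map_le : ∀ y ∈ S, ∀ z ∈ S, edist (T y) (T z) ≤ max (g y) (g z) * edist y z

namespace IsConformalInvolutionOn

variable {X : Type*} [EMetricSpace X] {T : X → X} {g : X → ℝ≥0} {S : Set X}

theorem factor_ne_zero (h : IsConformalInvolutionOn T g S) {y : X} (hy : y ∈ S) : g y ≠ 0 :=
  right_ne_zero_of_mul_eq_one (h.factor_map_mul_factor y hy)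

theorem factor_map (h : IsConformalInvolutionOn T g S) {y : X} (hy : y ∈ S) : g (T y) = (g y)⁻¹ :=
  eq_inv_of_mul_eq_one_left (h.factor_map_mul_factor y hy)

variable [MeasurableSpace X] [BorelSpace X] {d : ℝ}

theorem restrict_le_map_withDensity (h : IsConformalInvolutionOn T g S) (hT : Measurable T)
    (hg : Measurable g) (hS : MeasurableSet S) (hd : 0 ≤ d) :
    μH[d].restrict S ≤ ((μH[d].restrict S).withDensity fun y ↦ (g y ^ d : ℝ≥0)).map T := by
  refine Measure.le_iff.2 fun B hB ↦ ?_
  have hTB : MeasurableSet (T ⁻¹' B) := hT hB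
  have h_image : B ∩ S ⊆ T '' (T ⁻¹' B ∩ S) := fun y ⟨hyB, hyS⟩ ↦
    ⟨T y, ⟨by rwa [mem_preimage, h.leftInvOn hyS], h.mapsTo hyS⟩, h.leftInvOn hyS⟩
  rw [Measure.map_apply hT hB, withDensity_apply _ hTB, Measure.restrict_apply hB,
    Measure.restrict_restrict hTB]
  exact (measure_mono h_image).trans <| hausdorffMeasure_image_le_setLIntegral (hTB.inter hS) hg
    (fun y hy ↦ h.factor_ne_zero hy.2) hd fun y hy z hz ↦ h.edist_map_le y hy.2 z hz.2

theorem setLIntegral_le_setLIntegral_mul_comp (h : IsConformalInvolutionOn T g S)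
    (hT : Measurable T) (hg : Measurable g) (hS : MeasurableSet S) (hd : 0 ≤ d) {f : X → ℝ≥0∞}
    (hf : Measurable f) :
    ∫⁻ y in S, f y ∂μH[d] ≤ ∫⁻ y in S, (g y ^ d : ℝ≥0) * f (T y) ∂μH[d] := by
  refine (lintegral_mono' (h.restrict_le_map_withDensity hT hg hS hd) le_rfl).trans_eq ?_
  rw [lintegral_map hf hT]
  exact lintegral_withDensity_eq_lintegral_mul _ (hg.pow_const d).coe_nnreal_ennreal (hf.comp hT)

theorem setLIntegral_mul_comp (h : IsConformalInvolutionOn T g S) (hT : Measurable T)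
    (hg : Measurable g) (hS : MeasurableSet S) (hd : 0 ≤ d) {f : X → ℝ≥0∞} (hf : Measurable f) :
    ∫⁻ y in S, (g y ^ d : ℝ≥0) * f (T y) ∂μH[d] = ∫⁻ y in S, f y ∂μH[d] := by
  refine le_antisymm ?_ (h.setLIntegral_le_setLIntegral_mul_comp hT hg hS hd hf)
  have hgf : Measurable fun y ↦ ((g y ^ d : ℝ≥0) : ℝ≥0∞) * f (T y) :=
    (hg.pow_const d).coe_nnreal_ennreal.mul (hf.comp hT)
  refine (h.setLIntegral_le_setLIntegral_mul_comp hT hg hS hd hgf).trans_eq ?_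
  refine setLIntegral_congr_fun hS fun y hy ↦ ?_
  have hg_mul : ((g y ^ d : ℝ≥0) : ℝ≥0∞) * (g (T y) ^ d : ℝ≥0) = 1 := by
    rw [← ENNReal.coe_mul, ← NNReal.mul_rpow, mul_comm, h.factor_map_mul_factor y hy,
      NNReal.one_rpow, ENNReal.coe_one]
  simp only [h.leftInvOn hy, ← mul_assoc, hg_mul, one_mul]

theorem map_withDensity_restrict (h : IsConformalInvolutionOn T g S) (hT : Measurable T)
    (hg : Measurable g) (hS : MeasurableSet S) (hd : 0 ≤ d) :
    ((μH[d].restrict S).withDensity fun y ↦ (g y ^ d : ℝ≥0)).map T = μH[d].restrict S := by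
  refine Measure.ext_of_lintegral _ fun f hf ↦ ?_
  rw [lintegral_map hf hT, ← h.setLIntegral_mul_comp hT hg hS hd hf]
  exact lintegral_withDensity_eq_lintegral_mul _ (hg.pow_const d).coe_nnreal_ennreal (hf.comp hT)

theorem setIntegral_smul_comp {F : Type*} [NormedAddCommGroup F] [NormedSpace ℝ F]
    (h : IsConformalInvolutionOn T g S) (hT : Measurable T) (hg : Measurable g)
    (hS : MeasurableSet S) (hd : 0 ≤ d) {f : X → F}
    (hf : AEStronglyMeasurable f (μH[d].restrict S)) :
    ∫ y in S, g y ^ d • f (T y) ∂μH[d] = ∫ y in S, f y ∂μH[d] := by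
  have hmap := h.map_withDensity_restrict hT hg hS hd
  rw [← integral_withDensity_eq_integral_smul (hg.pow_const d) fun y ↦ f (T y),
    ← integral_map hT.aemeasurable (hmap.symm ▸ hf), hmap]

theorem setIntegral_factor_cpow_eq (h : IsConformalInvolutionOn T g S) (hT : Measurable T)
    (hg : Measurable g) (hS : MeasurableSet S) (hd : 0 ≤ d) {α β : ℂ} (hαβ : α + β = d) :
    ∫ y in S, ((g y : ℝ) : ℂ) ^ α ∂μH[d] = ∫ y in S, ((g y : ℝ) : ℂ) ^ β ∂μH[d] := by
  have hgα : Measurable fun y ↦ ((g y : ℝ) : ℂ) ^ α := by fun_prop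
  rw [← h.setIntegral_smul_comp hT hg hS hd hgα.aestronglyMeasurable]
  refine setIntegral_congr_fun hS fun y hy ↦ ?_
  have hgy : ((g y : ℝ) : ℂ) ≠ 0 := by exact_mod_cast h.factor_ne_zero hy
  have harg : ((g y : ℝ) : ℂ).arg ≠ Real.pi := by
    rw [Complex.arg_ofReal_of_nonneg (g y).coe_nonneg]
    exact Real.pi_ne_zero.symm
  calc g y ^ d • ((g (T y) : ℝ) : ℂ) ^ α
      = ((g y : ℝ) : ℂ) ^ (d : ℂ) * ((g y : ℝ) : ℂ) ^ (-α) := by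
        rw [h.factor_map hy, NNReal.smul_def, Complex.real_smul, NNReal.coe_rpow,
          Complex.ofReal_cpow (g y).coe_nonneg, NNReal.coe_inv, Complex.ofReal_inv,
          Complex.inv_cpow _ _ harg, Complex.cpow_neg]
    _ = ((g y : ℝ) : ℂ) ^ β := by
        rw [← Complex.cpow_add _ _ hgy, ← hαβ, add_neg_cancel_comm]

end IsConformalInvolutionOn

section Secant

open EuclideanGeometry

variable {V P : Type*} [NormedAddCommGroup V] [InnerProductSpace ℝ V] [MetricSpace P]
  [NormedAddTorsor V P] {s : Sphere P} {x y z : P}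

/-- The quantity `ω(x, y)` for spheres centred at `c`: the absolute power of `x` with respect to
the sphere through `y`, divided by `dist x y ^ 2`. It takes the junk value `0` at `y = x`. -/
noncomputable def secantRatio (c x y : P) : ℝ≥0 :=
  ‖dist x c ^ 2 - dist y c ^ 2‖₊ / nndist x y ^ 2

/-- The involution of the sphere `s` that exchanges the two points of `s` on each line through `x`.
A point `y ∉ s` is moved within the sphere through `y` concentric with `s`. -/
noncomputable def secantMap (s : Sphere P) (x y : P) : P :=
  s.secondInter y (y -ᵥ x)

theorem coe_secantRatio (c x y : P) :
    (secantRatio c x y : ℝ) = |dist x c ^ 2 - dist y c ^ 2| / dist x y ^ 2 := by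
  simp [secantRatio]

theorem coe_secantRatio_of_mem (hy : y ∈ s) :
    (secantRatio s.center x y : ℝ) = |s.power x| / dist x y ^ 2 := by
  rw [coe_secantRatio, mem_sphere.1 hy, Sphere.power]

theorem power_ne_zero_of_notMem_of_mem (hx : x ∉ s) (hy : y ∈ s) : s.power x ≠ 0 :=
  (Sphere.power_eq_zero_iff_mem_sphere (Sphere.radius_nonneg_of_mem hy)).not.2 hx

theorem secantMap_vsub (s : Sphere P) (x y : P) :
    secantMap s x y -ᵥ x =
      ((dist x s.center ^ 2 - dist y s.center ^ 2) / dist x y ^ 2) • (y -ᵥ x) := by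
  rcases eq_or_ne y x with rfl | hyx
  · simp [secantMap]
  set v := y -ᵥ x with hv
  set w := y -ᵥ s.center with hw
  have hv₀ : ‖v‖ ≠ 0 := norm_ne_zero_iff.2 (vsub_ne_zero.2 hyx)
  have hxc : x -ᵥ s.center = w - v := (vsub_sub_vsub_cancel_left _ _ _).symm
  have hcoeff : -2 * ⟪v, w⟫ / ⟪v, v⟫ + 1 = (‖w - v‖ ^ 2 - ‖w‖ ^ 2) / ‖v‖ ^ 2 := by
    rw [norm_sub_sq_real, real_inner_comm w v, real_inner_self_eq_norm_sq]
    field_simp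
    ring
  rw [secantMap, Sphere.secondInter, vadd_vsub_assoc, dist_eq_norm_vsub V x, dist_eq_norm_vsub V y,
    dist_comm, dist_eq_norm_vsub V y, ← hv, ← hw, hxc, ← hcoeff, add_smul, one_smul]

theorem secantMap_vsub_of_mem (hy : y ∈ s) :
    secantMap s x y -ᵥ x = (s.power x / dist x y ^ 2) • (y -ᵥ x) := by
  rw [secantMap_vsub, mem_sphere.1 hy, Sphere.power]

theorem secantMap_mem (hy : y ∈ s) : secantMap s x y ∈ s :=
  (Sphere.secondInter_mem _).2 hy

theorem secantMap_secantMap (hx : x ∉ s) (hy : y ∈ s) :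
    secantMap s x (secantMap s x y) = y := by
  have hxy : dist x y ≠ 0 := dist_ne_zero.2 (ne_of_mem_of_not_mem hy hx).symm
  have hcoeff : s.power x / dist x y ^ 2 ≠ 0 :=
    div_ne_zero (power_ne_zero_of_notMem_of_mem hx hy) (pow_ne_zero 2 hxy)
  calc secantMap s x (secantMap s x y)
      = s.secondInter (secantMap s x y) (secantMap s x y -ᵥ x) := rfl
    _ = s.secondInter (s.secondInter y (y -ᵥ x)) (y -ᵥ x) := by
      rw [secantMap_vsub_of_mem hy, Sphere.secondInter_smul _ _ _ hcoeff, secantMap]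
    _ = y := Sphere.secondInter_secondInter _ _ _

theorem dist_secantMap_right (hy : y ∈ s) :
    dist x (secantMap s x y) = secantRatio s.center x y * dist x y := by
  rw [dist_comm, dist_eq_norm_vsub V, secantMap_vsub_of_mem hy, norm_smul, ← dist_eq_norm_vsub V,
    dist_comm y, coe_secantRatio_of_mem hy, Real.norm_eq_abs, abs_div, abs_sq]

theorem secantRatio_secantMap_mul (hx : x ∉ s) (hy : y ∈ s) :
    secantRatio s.center x (secantMap s x y) * secantRatio s.center x y = 1 := by
  have hxy : dist x y ≠ 0 := dist_ne_zero.2 (ne_of_mem_of_not_mem hy hx).symm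
  have hpow : |s.power x| ≠ 0 := abs_ne_zero.2 (power_ne_zero_of_notMem_of_mem hx hy)
  refine NNReal.coe_injective ?_
  rw [NNReal.coe_mul, coe_secantRatio_of_mem (secantMap_mem hy), dist_secantMap_right hy,
    coe_secantRatio_of_mem hy, NNReal.coe_one]
  field_simp

theorem dist_secantMap_secantMap (hx : x ∉ s) (hy : y ∈ s) (hz : z ∈ s) :
    dist (secantMap s x y) (secantMap s x z) =
      |s.power x| / (dist x y * dist x z) * dist y z := by
  have h_inv (w : P) (hw : w ∈ s) :
      secantMap s x w -ᵥ x = s.power x • (1 / ‖w -ᵥ x‖) ^ 2 • (w -ᵥ x) := by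
    rw [secantMap_vsub_of_mem hw, smul_smul, dist_comm, dist_eq_norm_vsub V, one_div, inv_pow,
      div_eq_mul_inv]
  have hyx : y -ᵥ x ≠ 0 := vsub_ne_zero.2 (ne_of_mem_of_not_mem hy hx)
  have hzx : z -ᵥ x ≠ 0 := vsub_ne_zero.2 (ne_of_mem_of_not_mem hz hx)
  rw [← dist_vsub_cancel_right _ _ x, h_inv y hy, h_inv z hz, dist_smul₀,
    dist_div_norm_sq_smul hyx hzx, dist_vsub_cancel_right, ← dist_eq_norm_vsub V,
    ← dist_eq_norm_vsub V, dist_comm y x, dist_comm z x, Real.norm_eq_abs, one_pow, ← mul_assoc,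
    mul_one_div]

theorem dist_secantMap_secantMap_sq (hx : x ∉ s) (hy : y ∈ s) (hz : z ∈ s) :
    dist (secantMap s x y) (secantMap s x z) ^ 2 =
      secantRatio s.center x y * secantRatio s.center x z * dist y z ^ 2 := by
  rw [dist_secantMap_secantMap hx hy hz, coe_secantRatio_of_mem hy, coe_secantRatio_of_mem hz]
  ring

theorem edist_secantMap_secantMap_le (hx : x ∉ s) (hy : y ∈ s) (hz : z ∈ s) :
    edist (secantMap s x y) (secantMap s x z) ≤
      max (secantRatio s.center x y) (secantRatio s.center x z) * edist y z := by
  set M := max (secantRatio s.center x y) (secantRatio s.center x z)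
  have h_sq : dist (secantMap s x y) (secantMap s x z) ^ 2 ≤ (M * dist y z) ^ 2 := by
    rw [dist_secantMap_secantMap_sq hx hy hz, mul_pow, sq (M : ℝ)]
    gcongr
    exacts [le_max_left _ _, le_max_right _ _]
  have h_dist : dist (secantMap s x y) (secantMap s x z) ≤ M * dist y z :=
    le_of_sq_le_sq h_sq (by positivity)
  rw [dist_nndist, dist_nndist] at h_dist
  rw [edist_nndist, edist_nndist]
  exact_mod_cast h_dist

theorem isConformalInvolutionOn_secantMap (hx : x ∉ s) :
    IsConformalInvolutionOn (secantMap s x) (secantRatio s.center x) s where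
  mapsTo _ hy := secantMap_mem hy
  leftInvOn _ hy := secantMap_secantMap hx hy
  factor_map_mul_factor _ hy := secantRatio_secantMap_mul hx hy
  edist_map_le _ hy _ hz := edist_secantMap_secantMap_le hx hy hz

variable [MeasurableSpace P] [BorelSpace P]

theorem measurable_secantRatio (c x : P) : Measurable (secantRatio c x) := by
  have h_power : Measurable fun y ↦ ‖dist x c ^ 2 - dist y c ^ 2‖₊ :=
    Continuous.measurable (by fun_prop)
  have h_dist : Measurable fun y ↦ nndist x y ^ 2 := Continuous.measurable (by fun_prop)
  exact h_power.div h_dist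

theorem measurable_secantMap (s : Sphere P) (x : P) : Measurable (secantMap s x) := by
  refine measurable_of_continuousOn_compl_singleton x ?_
  unfold secantMap Sphere.secondInter
  have h_ne (y : P) (hy : y ∈ ({x}ᶜ : Set P)) : ⟪y -ᵥ x, y -ᵥ x⟫ ≠ 0 :=
    inner_self_ne_zero.2 (vsub_ne_zero.2 hy)
  fun_prop (disch := assumption)

end Secant

theorem main_theorem_statement_A_general {V P : Type*} [NormedAddCommGroup V]
    [InnerProductSpace ℝ V] [FiniteDimensional ℝ V] [Nontrivial V] [MetricSpace P]
    [NormedAddTorsor V P] [MeasurableSpace P] [BorelSpace P]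
    {s : EuclideanGeometry.Sphere P} {x : P} (hx : x ∉ s) {α β : ℂ}
    (hαβ : α + β = Module.finrank ℝ V - 1) :
    ∫ y in s, ((secantRatio s.center x y : ℝ) : ℂ) ^ α ∂μH[Module.finrank ℝ V - 1] =
      ∫ y in s, ((secantRatio s.center x y : ℝ) : ℂ) ^ β ∂μH[Module.finrank ℝ V - 1] := by
  have h_dim : (0 : ℝ) ≤ Module.finrank ℝ V - 1 :=
    sub_nonneg.2 (Nat.one_le_cast.2 Module.finrank_pos)
  exact (isConformalInvolutionOn_secantMap hx).setIntegral_factor_cpow_eq (measurable_secantMap s x)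
    (measurable_secantRatio s.center x) Metric.isClosed_sphere.measurableSet h_dim
    (by push_cast; exact hαβ)

/-- Main Theorem, Statement (A): if `α + β = k`, then
`∫_{S^k(R)} ω(x,y)^α dμH[k] = ∫_{S^k(R)} ω(x,y)^β dμH[k]`. -/
theorem main_theorem_statement_A
    (k : ℕ) (hk : 1 ≤ k) (R : ℝ) (hR : 0 < R)
    (x : EuclideanSpace ℝ (Fin (k + 1))) (hx : ‖x‖ ≠ R)
    (α β : ℂ) (hab : α + β = (k : ℂ)) :
    ∫ y in Metric.sphere (0 : EuclideanSpace ℝ (Fin (k + 1))) R,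
        ((|‖x‖ ^ 2 - ‖y‖ ^ 2| / ‖x - y‖ ^ 2 : ℝ) : ℂ) ^ α ∂μH[k]
      = ∫ y in Metric.sphere (0 : EuclideanSpace ℝ (Fin (k + 1))) R,
        ((|‖x‖ ^ 2 - ‖y‖ ^ 2| / ‖x - y‖ ^ 2 : ℝ) : ℂ) ^ β ∂μH[k] := by
  simpa [coe_secantRatio, dist_eq_norm] using main_theorem_statement_A_general (x := x)
    (s := ⟨0, R⟩) (by simpa [EuclideanGeometry.mem_sphere] using hx) (by simpa using hab)
end

section
/- (Main Theorem, Statement (B).) Let k ≥ 1, R > 0, and x ∈ E with 0 < ‖x‖ and ‖x‖ ≠ R. If α, β ∈ ℝ satisfy ∫_{y ∈ S^k(R)} ω(x,y)^α dμH[k](y) = ∫_{y ∈ S^k(R)} ω(x,y)^β dμH[k](y) (real powers, real-valued integrals), then α + β = k or α = β. -/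
open MeasureTheory

/-!
The inversion `T` of `E` with centre `x` that preserves the sphere `S^k(R)` scales lengths at `y` by
`ω(x, y)` and satisfies `ω(x, T y) = ω(x, y)⁻¹`. Changing variables by `T`, whose Jacobian is `ω^k`,
turns `∫ ω^γ` into `∫ ω^(k - γ)`. Averaging the two,
`∫ ω^γ = ∫ ω^(k / 2) * cosh ((γ - k / 2) * log ω)`, which is strictly increasing in `|γ - k / 2|`
because `ω` is not identically `1`. So equal integrals force `|α - k / 2| = |β - k / 2|`.

The change of variables needs no smooth structure: on a set where `c ≤ ω`, the involution `T` is
inverted by a `c⁻¹`-Lipschitz map, which gives `ω^k μH[k] ≤ T_* μH[k]`; this inequality, applied to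
both `ω^(-γ)` and `ω^(γ - k)`, is enough.
-/

open Filter Function Metric Module Set Topology
open scoped ENNReal NNReal

theorem withDensity_le_of_forall_mul_le {X : Type*} [MeasurableSpace X] {μ ν : Measure X}
    {w : X → ℝ≥0∞} (h : ∀ (c : ℝ≥0) (s : Set X), c ≠ 0 → MeasurableSet s → (∀ p ∈ s, c ≤ w p) →
      c * μ s ≤ ν s) :
    μ.withDensity w ≤ ν := by
  refine Measure.le_iff.2 fun s hs => ?_
  rw [withDensity_apply _ hs, lintegral_eq_nnreal]
  refine iSup₂_le fun φ hφ => ?_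
  rw [SimpleFunc.map_lintegral]
  calc ∑ c ∈ φ.range, (c : ℝ≥0∞) * μ.restrict s (φ ⁻¹' {c})
      ≤ ∑ c ∈ φ.range, ν.restrict s (φ ⁻¹' {c}) := by
        refine Finset.sum_le_sum fun c _ => ?_
        obtain rfl | hc := eq_or_ne c 0
        · simp only [ENNReal.coe_zero, zero_mul, zero_le]
        · simp only [Measure.restrict_apply (φ.measurableSet_fiber c)]
          refine h c _ hc ((φ.measurableSet_fiber c).inter hs) ?_
          rintro p ⟨rfl, -⟩
          exact hφ p
    _ = ν s := by rw [φ.sum_range_measure_preimage_singleton, Measure.restrict_apply_univ]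

/-- An involution `T` of a metric space is Möbius with conformal factor `w` when it scales the
distance between `p` and `q` by the geometric mean of `w p` and `w q`, as inversions of Euclidean
space do. -/
structure IsMoebiusInvolution {X : Type*} [MetricSpace X] (T : X → X) (w : X → ℝ) : Prop where
  involutive : Involutive T
  factor_pos : ∀ p, 0 < w p
  dist_map : ∀ p q, dist (T p) (T q) = √(w p * w q) * dist p q
  factor_map : ∀ p, w (T p) = (w p)⁻¹

namespace IsMoebiusInvolution

variable {X : Type*} [MetricSpace X] {T : X → X} {w : X → ℝ}

theorem continuous (hT : IsMoebiusInvolution T w) (hw : Continuous w) : Continuous T := by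
  refine continuous_iff_continuousAt.2 fun p => tendsto_iff_dist_tendsto_zero.2 ?_
  have hlim : Tendsto (fun q => √(w q * w p) * dist q p) (𝓝 p) (𝓝 (√(w p * w p) * dist p p)) := by
    have : Continuous fun q => √(w q * w p) * dist q p := by fun_prop
    exact this.tendsto p
  simpa only [hT.dist_map, dist_self, mul_zero] using hlim

theorem lipschitzOnWith_image (hT : IsMoebiusInvolution T w) {c : ℝ≥0} (hc : c ≠ 0) {s : Set X}
    (hs : ∀ p ∈ s, c ≤ w p) : LipschitzOnWith c⁻¹ T (T '' s) := by
  refine LipschitzOnWith.of_dist_le_mul ?_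
  rintro _ ⟨p, hp, rfl⟩ _ ⟨q, hq, rfl⟩
  have hscale : (c : ℝ) ≤ √(w p * w q) :=
    Real.le_sqrt_of_sq_le (by rw [sq]; gcongr; exacts [(hT.factor_pos p).le, hs p hp, hs q hq])
  rw [hT.involutive, hT.involutive, hT.dist_map, NNReal.coe_inv,
    le_inv_mul_iff₀ (by positivity)]
  gcongr

variable [MeasurableSpace X] [BorelSpace X] {d : ℝ}

theorem mul_hausdorffMeasure_le (hT : IsMoebiusInvolution T w) (hd : 0 ≤ d) {c : ℝ≥0}
    (hc : c ≠ 0) {s : Set X} (hs : ∀ p ∈ s, c ≤ w p) :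
    (c : ℝ≥0∞) ^ d * μH[d] s ≤ μH[d] (T '' s) := by
  have hle := (hT.lipschitzOnWith_image hc hs).hausdorffMeasure_image_le hd
  rw [← image_comp, hT.involutive.comp_self, image_id, ENNReal.coe_inv hc, ENNReal.inv_rpow] at hle
  refine (ENNReal.mul_le_iff_le_inv ?_ ?_).2 hle
  · simp [hc]
  · simp [hd]

theorem withDensity_le_map (hT : IsMoebiusInvolution T w) (hw : Continuous w) (hd : 0 < d) :
    (μH[d] : Measure X).withDensity (fun p => ENNReal.ofReal (w p ^ d)) ≤ μH[d].map T := by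
  refine withDensity_le_of_forall_mul_le fun c s hc _ hs => ?_
  have hroot : ∀ p ∈ s, (c ^ d⁻¹ : ℝ≥0) ≤ w p := fun p hp => by
    rw [NNReal.coe_rpow, Real.rpow_inv_le_iff_of_pos c.coe_nonneg (hT.factor_pos p).le hd]
    exact (ENNReal.ofReal_le_ofReal_iff (by have := hT.factor_pos p; positivity)).1
      (by simpa using hs p hp)
  have hle := hT.mul_hausdorffMeasure_le hd.le (by simp [hc]) hroot
  rw [← ENNReal.coe_rpow_of_nonneg _ hd.le, NNReal.rpow_inv_rpow hd.ne',
    hT.involutive.image_eq_preimage_symm] at hle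
  exact hle.trans (Measure.le_map_apply (hT.continuous hw).measurable.aemeasurable s)

theorem lintegral_rpow_sub_le (hT : IsMoebiusInvolution T w) (hw : Continuous w) (hd : 0 < d)
    (α : ℝ) :
    ∫⁻ p, ENNReal.ofReal (w p ^ (d - α)) ∂μH[d] ≤ ∫⁻ p, ENNReal.ofReal (w p ^ α) ∂μH[d] := by
  have hmeas : ∀ γ : ℝ, Measurable fun p => ENNReal.ofReal (w p ^ γ) := fun γ =>
    (hw.measurable.pow_const γ).ennreal_ofReal
  have hsplit : ∀ p, ENNReal.ofReal (w p ^ (d - α))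
      = ENNReal.ofReal (w p ^ d) * ENNReal.ofReal (w p ^ (-α)) := fun p => by
    have hp := hT.factor_pos p
    rw [← ENNReal.ofReal_mul (by positivity), ← Real.rpow_add hp, sub_eq_add_neg]
  calc ∫⁻ p, ENNReal.ofReal (w p ^ (d - α)) ∂μH[d]
      = ∫⁻ p, ENNReal.ofReal (w p ^ (-α))
          ∂(μH[d] : Measure X).withDensity fun p => ENNReal.ofReal (w p ^ d) := by
        rw [lintegral_withDensity_eq_lintegral_mul _ (hmeas d) (hmeas _)]
        simp only [hsplit, Pi.mul_apply]
    _ ≤ ∫⁻ p, ENNReal.ofReal (w p ^ (-α)) ∂μH[d].map T :=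
        lintegral_mono' (hT.withDensity_le_map hw hd) le_rfl
    _ = ∫⁻ p, ENNReal.ofReal (w p ^ α) ∂μH[d] := by
        rw [lintegral_map (hmeas _) (hT.continuous hw).measurable]
        simp only [hT.factor_map, Real.inv_rpow (hT.factor_pos _).le,
          Real.rpow_neg (hT.factor_pos _).le, inv_inv]

theorem integral_rpow_sub (hT : IsMoebiusInvolution T w) (hw : Continuous w) (hd : 0 < d)
    (α : ℝ) : ∫ p, w p ^ (d - α) ∂μH[d] = ∫ p, w p ^ α ∂μH[d] := by
  have htoReal : ∀ γ : ℝ,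
      ∫ p, w p ^ γ ∂μH[d] = (∫⁻ p, ENNReal.ofReal (w p ^ γ) ∂μH[d]).toReal := fun γ =>
    integral_eq_lintegral_of_nonneg_ae
      (.of_forall fun p => Real.rpow_nonneg (hT.factor_pos p).le γ)
      (hw.measurable.pow_const γ).aestronglyMeasurable
  rw [htoReal, htoReal]
  congr 1
  refine le_antisymm (hT.lintegral_rpow_sub_le hw hd α) ?_
  simpa only [sub_sub_cancel] using hT.lintegral_rpow_sub_le hw hd (d - α)

end IsMoebiusInvolution

section Strictness

variable {X : Type*} [TopologicalSpace X]

theorem integral_lt_integral_of_continuous [CompactSpace X] [MeasurableSpace X]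
    [OpensMeasurableSpace X] {μ : Measure X} [IsFiniteMeasure μ] [μ.IsOpenPosMeasure]
    {f g : X → ℝ} (hf : Continuous f) (hg : Continuous g) (hle : f ≤ g) {p : X}
    (hlt : f p < g p) : ∫ q, f q ∂μ < ∫ q, g q ∂μ := by
  have hint : ∀ {f : X → ℝ}, Continuous f → Integrable f μ := fun hf =>
    hf.integrable_of_hasCompactSupport (.of_compactSpace _)
  rw [← sub_pos, ← integral_sub (hint hg) (hint hf)]
  exact (hg.sub hf).integral_pos_of_hasCompactSupport_nonneg_nonzero (.of_compactSpace _)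
    (fun q => sub_nonneg.2 (hle q)) (sub_pos.2 hlt).ne'

theorem rpow_add_rpow_sub_eq_cosh {t : ℝ} (ht : 0 < t) (d γ : ℝ) :
    t ^ γ + t ^ (d - γ) = 2 * (t ^ (d / 2) * Real.cosh ((γ - d / 2) * Real.log t)) := by
  simp only [Real.rpow_def_of_pos ht, Real.cosh_eq, mul_div_assoc', mul_add, ← Real.exp_add]
  ring_nf

variable [CompactSpace X] [MeasurableSpace X] [OpensMeasurableSpace X] {μ : Measure X}
  [IsFiniteMeasure μ] {w : X → ℝ} {d : ℝ}

theorem integral_rpow_eq_integral_cosh (hw : Continuous w) (hpos : ∀ p, 0 < w p)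
    (hsymm : ∀ γ : ℝ, ∫ p, w p ^ (d - γ) ∂μ = ∫ p, w p ^ γ ∂μ) (γ : ℝ) :
    ∫ p, w p ^ γ ∂μ = ∫ p, w p ^ (d / 2) * Real.cosh ((γ - d / 2) * Real.log (w p)) ∂μ := by
  have hint : ∀ δ : ℝ, Integrable (fun p => w p ^ δ) μ := fun δ =>
    (hw.rpow_const fun p => .inl (hpos p).ne').integrable_of_hasCompactSupport (.of_compactSpace _)
  refine mul_left_cancel₀ two_ne_zero ?_
  calc 2 * ∫ p, w p ^ γ ∂μ = ∫ p, (w p ^ γ + w p ^ (d - γ)) ∂μ := by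
        rw [integral_add (hint γ) (hint (d - γ)), hsymm, two_mul]
    _ = 2 * ∫ p, w p ^ (d / 2) * Real.cosh ((γ - d / 2) * Real.log (w p)) ∂μ := by
        simp only [rpow_add_rpow_sub_eq_cosh (hpos _), integral_const_mul]

theorem integral_rpow_lt_integral_rpow [μ.IsOpenPosMeasure] (hw : Continuous w)
    (hpos : ∀ p, 0 < w p) (hsymm : ∀ γ : ℝ, ∫ p, w p ^ (d - γ) ∂μ = ∫ p, w p ^ γ ∂μ)
    {p : X} (hp : w p ≠ 1) {α β : ℝ} (hαβ : |α - d / 2| < |β - d / 2|) :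
    ∫ q, w q ^ α ∂μ < ∫ q, w q ^ β ∂μ := by
  have hcont : ∀ γ : ℝ,
      Continuous fun q => w q ^ (d / 2) * Real.cosh ((γ - d / 2) * Real.log (w q)) := fun γ =>
    (hw.rpow_const fun q => .inl (hpos q).ne').mul <|
      Real.continuous_cosh.comp (continuous_const.mul (hw.log fun q => (hpos q).ne'))
  simp only [integral_rpow_eq_integral_cosh hw hpos hsymm]
  refine integral_lt_integral_of_continuous (hcont α) (hcont β) (fun q => ?_) (p := p) ?_
  · refine mul_le_mul_of_nonneg_left (Real.cosh_le_cosh.2 ?_) (Real.rpow_nonneg (hpos q).le _)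
    rw [abs_mul, abs_mul]
    gcongr
  · refine mul_lt_mul_of_pos_left (Real.cosh_lt_cosh.2 ?_) (Real.rpow_pos_of_pos (hpos p) _)
    rw [abs_mul, abs_mul]
    exact mul_lt_mul_of_pos_right hαβ (abs_pos.2 (Real.log_ne_zero_of_pos_of_ne_one (hpos p) hp))

theorem add_eq_or_eq_of_integral_rpow_eq [μ.IsOpenPosMeasure] (hw : Continuous w)
    (hpos : ∀ p, 0 < w p) (hsymm : ∀ γ : ℝ, ∫ p, w p ^ (d - γ) ∂μ = ∫ p, w p ^ γ ∂μ)
    {p : X} (hp : w p ≠ 1) {α β : ℝ} (h : ∫ q, w q ^ α ∂μ = ∫ q, w q ^ β ∂μ) :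
    α + β = d ∨ α = β := by
  have hdist : |α - d / 2| = |β - d / 2| := by
    by_contra hne
    rcases lt_or_gt_of_ne hne with hlt | hlt
    · exact (integral_rpow_lt_integral_rpow hw hpos hsymm hp hlt).ne h
    · exact (integral_rpow_lt_integral_rpow hw hpos hsymm hp hlt).ne' h
  rcases abs_eq_abs.1 hdist with heq | heq
  · right; linarith
  · left; linarith

end Strictness

section LipschitzCharts

variable {X Y : Type*} [MetricSpace X] [MeasurableSpace X] [BorelSpace X] [MetricSpace Y]
  [MeasurableSpace Y] [BorelSpace Y] {f : X → Y} {x : X} {K : ℝ≥0} {t : Set X} {d : ℝ}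

theorem finiteAtFilter_hausdorffMeasure_of_lipschitzOnWith
    [IsLocallyFiniteMeasure (μH[d] : Measure X)] (hd : 0 ≤ d) (ht : t ∈ 𝓝 x)
    (hf : LipschitzOnWith K f t) (hopen : 𝓝 (f x) ≤ map f (𝓝 x)) :
    (μH[d] : Measure Y).FiniteAtFilter (𝓝 (f x)) := by
  obtain ⟨s, hs, hsfin⟩ := (μH[d] : Measure X).finiteAt_nhds x
  refine ⟨f '' (s ∩ t), hopen (image_mem_map (inter_mem hs ht)), ?_⟩
  calc μH[d] (f '' (s ∩ t))
      ≤ (K : ℝ≥0∞) ^ d * μH[d] (s ∩ t) :=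
        (hf.mono inter_subset_right).hausdorffMeasure_image_le hd
    _ < ∞ := ENNReal.mul_lt_top (ENNReal.rpow_lt_top_of_nonneg hd ENNReal.coe_ne_top)
        ((measure_mono inter_subset_left).trans_lt hsfin)

theorem hausdorffMeasure_ne_zero_of_lipschitzOnWith
    [(μH[d] : Measure Y).IsOpenPosMeasure] (hd : 0 ≤ d) (ht : t ∈ 𝓝 x)
    (hf : LipschitzOnWith K f t) (hopen : 𝓝 (f x) ≤ map f (𝓝 x)) {s : Set X} (hs : s ∈ 𝓝 x) :
    μH[d] s ≠ 0 := by
  intro hzero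
  have hle := (hf.mono (inter_subset_right : s ∩ t ⊆ t)).hausdorffMeasure_image_le hd
  rw [measure_mono_null inter_subset_left hzero, mul_zero] at hle
  have himage : f '' (s ∩ t) ∈ 𝓝 (f x) := hopen (image_mem_map (inter_mem hs ht))
  exact (Measure.measure_pos_of_mem_nhds _ himage).not_ge hle

end LipschitzCharts

section SphereMeasure

variable {E : Type*} [NormedAddCommGroup E] [InnerProductSpace ℝ E]

theorem mem_stereographic_neg_source (p : sphere (0 : E) 1) :
    p ∈ (stereographic (norm_eq_of_mem_sphere (-p))).source := by
  rw [stereographic_source, mem_compl_singleton_iff]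
  exact ne_neg_of_mem_unit_sphere ℝ p

theorem exists_lipschitzOnWith_stereographic (p : sphere (0 : E) 1) :
    ∃ K, ∃ t ∈ 𝓝 p, LipschitzOnWith K (stereographic (norm_eq_of_mem_sphere (-p))) t := by
  have hinner : innerSL ℝ ((-p : sphere (0 : E) 1) : E) p = -1 := by
    rw [innerSL_apply_apply, coe_neg_sphere, inner_neg_left, real_inner_self_eq_norm_sq,
      norm_eq_of_mem_sphere, one_pow]
  have hdom : {y | innerSL ℝ ((-p : sphere (0 : E) 1) : E) y ≠ 1} ∈ 𝓝 (p : E) :=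
    (isOpen_ne_fun (innerSL ℝ _).continuous continuous_const).mem_nhds (by
      rw [mem_ofPred_eq, hinner]; norm_num)
  obtain ⟨K, t, ht, hlip⟩ :=
    ((contDiffOn_stereoToFun (n := 1)).contDiffAt hdom).exists_lipschitzOnWith
  exact ⟨K, _, continuous_subtype_val.continuousAt ht, fun y hy z hz => hlip hy hz⟩

theorem exists_lipschitzOnWith_stereographic_symm {v : E} (hv : ‖v‖ = 1) (u : (ℝ ∙ v)ᗮ) :
    ∃ K, ∃ t ∈ 𝓝 u, LipschitzOnWith K (stereographic hv).symm t := by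
  obtain ⟨K, t, ht, hlip⟩ := (contDiff_stereoInvFunAux (v := v)).locallyLipschitz (u : E)
  exact ⟨K, _, continuous_subtype_val.continuousAt ht, fun y hy z hz => hlip hy hz⟩

theorem exists_homeomorph_unitSphere_lipschitzWith {R : ℝ} (hR : 0 < R) :
    ∃ φ : sphere (0 : E) 1 ≃ₜ sphere (0 : E) R,
      (∃ K, LipschitzWith K φ) ∧ ∃ K, LipschitzWith K φ.symm := by
  have hmem (y : E) :
      y ∈ sphere 0 1 ↔ Homeomorph.smulOfNeZero R hR.ne' y ∈ sphere (0 : E) R := by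
    simp [norm_smul, abs_of_pos hR, hR.ne']
  exact ⟨(Homeomorph.smulOfNeZero R hR.ne').subtype hmem,
    ⟨‖R‖₊, fun y z => lipschitzWith_smul R (y : E) z⟩,
    ⟨‖R⁻¹‖₊, fun y z => lipschitzWith_smul R⁻¹ (y : E) z⟩⟩

variable [MeasurableSpace E] [BorelSpace E] {k : ℕ} [Fact (finrank ℝ E = k + 1)]

theorem isAddHaarMeasure_hausdorffMeasure_orthogonal {v : E} (hv : v ≠ 0) :
    (μH[k] : Measure (ℝ ∙ v)ᗮ).IsAddHaarMeasure := by
  have : FiniteDimensional ℝ E := .of_fact_finrank_eq_succ k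
  have hfinrank : finrank ℝ (ℝ ∙ v)ᗮ = k := Submodule.finrank_orthogonal_span_singleton hv
  exact hfinrank ▸ isAddHaarMeasure_hausdorffMeasure

theorem isLocallyFiniteMeasure_hausdorffMeasure_unitSphere :
    IsLocallyFiniteMeasure (μH[k] : Measure (sphere (0 : E) 1)) := by
  refine ⟨fun p => ?_⟩
  have : FiniteDimensional ℝ E := .of_fact_finrank_eq_succ k
  have := isAddHaarMeasure_hausdorffMeasure_orthogonal (k := k) (ne_zero_of_mem_unit_sphere (-p))
  let e := stereographic (norm_eq_of_mem_sphere (-p))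
  have hp : p ∈ e.source := mem_stereographic_neg_source p
  obtain ⟨K, t, ht, hlip⟩ :=
    exists_lipschitzOnWith_stereographic_symm (norm_eq_of_mem_sphere (-p)) (e p)
  have hfin := finiteAtFilter_hausdorffMeasure_of_lipschitzOnWith k.cast_nonneg ht hlip
    (e.symm.map_nhds_eq (e.map_source hp)).ge
  rwa [e.left_inv hp] at hfin

theorem isOpenPosMeasure_hausdorffMeasure_unitSphere :
    (μH[k] : Measure (sphere (0 : E) 1)).IsOpenPosMeasure := by
  refine ⟨fun U hU ⟨p, hpU⟩ => ?_⟩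
  have := isAddHaarMeasure_hausdorffMeasure_orthogonal (k := k) (ne_zero_of_mem_unit_sphere (-p))
  obtain ⟨K, t, ht, hlip⟩ := exists_lipschitzOnWith_stereographic p
  exact hausdorffMeasure_ne_zero_of_lipschitzOnWith k.cast_nonneg ht hlip
    ((stereographic _).map_nhds_eq (mem_stereographic_neg_source p)).ge (hU.mem_nhds hpU)

theorem isFiniteMeasure_hausdorffMeasure_sphere {R : ℝ} (hR : 0 < R) :
    IsFiniteMeasure (μH[k] : Measure (sphere (0 : E) R)) := by
  have : FiniteDimensional ℝ E := .of_fact_finrank_eq_succ k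
  have := isLocallyFiniteMeasure_hausdorffMeasure_unitSphere (E := E) (k := k)
  have : IsLocallyFiniteMeasure (μH[k] : Measure (sphere (0 : E) R)) := by
    obtain ⟨φ, ⟨K, hφ⟩, -⟩ := exists_homeomorph_unitSphere_lipschitzWith (E := E) hR
    refine ⟨φ.surjective.forall.2 fun p => ?_⟩
    exact finiteAtFilter_hausdorffMeasure_of_lipschitzOnWith k.cast_nonneg univ_mem
      hφ.lipschitzOnWith (φ.map_nhds_eq p).ge
  exact CompactSpace.isFiniteMeasure

theorem isOpenPosMeasure_hausdorffMeasure_sphere {R : ℝ} (hR : 0 < R) :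
    (μH[k] : Measure (sphere (0 : E) R)).IsOpenPosMeasure := by
  have := isOpenPosMeasure_hausdorffMeasure_unitSphere (E := E) (k := k)
  obtain ⟨φ, -, K, hφ⟩ := exists_homeomorph_unitSphere_lipschitzWith (E := E) hR
  refine ⟨fun U hU ⟨p, hpU⟩ => ?_⟩
  exact hausdorffMeasure_ne_zero_of_lipschitzOnWith k.cast_nonneg univ_mem
    hφ.lipschitzOnWith (φ.symm.map_nhds_eq p).ge (hU.mem_nhds hpU)

end SphereMeasure

theorem setIntegral_hausdorffMeasure_eq_integral_subtype {X : Type*} [MetricSpace X]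
    [MeasurableSpace X] [BorelSpace X] {d : ℝ} (hd : 0 ≤ d) {s : Set X} (hs : MeasurableSet s)
    (f : X → ℝ) :
    ∫ y in s, f y ∂μH[d] = ∫ p : s, f p ∂μH[d] := by
  have hmap := (isometry_subtype_coe (s := s)).map_hausdorffMeasure (.inl hd)
  rw [Subtype.range_coe] at hmap
  rw [← hmap, (MeasurableEmbedding.subtype_coe hs).integral_map]

section ConformalFactor

variable {E : Type*} [NormedAddCommGroup E] {x : E} {R : ℝ}

/-- The function `ω(x, y)` of the paper. For `y` on a sphere centred at `0`, it is the factor by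
which the inversion with centre `x` preserving this sphere scales lengths at `y`. -/
noncomputable def conformalFactor (x y : E) : ℝ :=
  |‖x‖ ^ 2 - ‖y‖ ^ 2| / ‖x - y‖ ^ 2

theorem ne_of_mem_sphere_of_norm_ne (hx : ‖x‖ ≠ R) (p : sphere (0 : E) R) : (p : E) ≠ x := by
  rintro rfl
  exact hx (norm_eq_of_mem_sphere p)

theorem conformalFactor_eq_of_mem_sphere (x : E) (p : sphere (0 : E) R) :
    conformalFactor x p = |‖x‖ ^ 2 - R ^ 2| / ‖(p : E) - x‖ ^ 2 := by
  rw [conformalFactor, norm_eq_of_mem_sphere, norm_sub_rev]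

theorem continuous_conformalFactor_sphere (hx : ‖x‖ ≠ R) :
    Continuous fun p : sphere (0 : E) R => conformalFactor x p := by
  simp only [conformalFactor_eq_of_mem_sphere]
  refine continuous_const.div (by fun_prop) fun p => ?_
  exact pow_ne_zero 2 (norm_ne_zero_iff.2 (sub_ne_zero.2 (ne_of_mem_sphere_of_norm_ne hx p)))

theorem exists_one_lt_conformalFactor [NormedSpace ℝ E] (hR : 0 < R) (hx₀ : x ≠ 0) (hx : ‖x‖ ≠ R) :
    ∃ p : sphere (0 : E) R, 1 < conformalFactor x p := by
  have hxpos : 0 < ‖x‖ := norm_pos_iff.2 hx₀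
  have hmem : (R / ‖x‖) • x ∈ sphere (0 : E) R := by
    rw [mem_sphere_zero_iff_norm, norm_smul, norm_div, norm_norm, Real.norm_of_nonneg hR.le,
      div_mul_cancel₀ _ hxpos.ne']
  have hdist : ‖(R / ‖x‖) • x - x‖ = |‖x‖ - R| :=
    calc ‖(R / ‖x‖) • x - x‖ = ‖(R / ‖x‖ - 1) • x‖ := by rw [sub_smul, one_smul]
      _ = |(R / ‖x‖ - 1) * ‖x‖| := by rw [norm_smul, Real.norm_eq_abs, abs_mul, abs_norm]
      _ = |‖x‖ - R| := by rw [sub_mul, one_mul, div_mul_cancel₀ _ hxpos.ne', abs_sub_comm]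
  have hgap : 0 < |‖x‖ - R| := abs_pos.2 (sub_ne_zero.2 hx)
  refine ⟨⟨_, hmem⟩, ?_⟩
  rw [conformalFactor_eq_of_mem_sphere, hdist, one_lt_div (by positivity), sq_sub_sq, abs_mul,
    abs_of_pos (by positivity : 0 < ‖x‖ + R), sq]
  refine mul_lt_mul_of_pos_right (abs_lt.2 ⟨?_, ?_⟩) hgap <;> linarith

end ConformalFactor

section Inversion

variable {E : Type*} [NormedAddCommGroup E]

/-- The inversion with centre `x` and power `c`. For `c = r ^ 2` it is
`EuclideanGeometry.inversion x r`; a negative power composes this with the reflection in `x`, and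
is needed to preserve a sphere having `x` in its interior. -/
noncomputable def inversionOfPower [NormedSpace ℝ E] (x : E) (c : ℝ) (y : E) : E :=
  x + (c / ‖y - x‖ ^ 2) • (y - x)

section NormedSpace

variable [NormedSpace ℝ E]

theorem inversionOfPower_sub (x : E) (c : ℝ) (y : E) :
    inversionOfPower x c y - x = (c / ‖y - x‖ ^ 2) • (y - x) :=
  add_sub_cancel_left _ _

theorem norm_inversionOfPower_sub (x : E) (c : ℝ) {y : E} (hy : y ≠ x) :
    ‖inversionOfPower x c y - x‖ = |c| / ‖y - x‖ := by
  have hyx : ‖y - x‖ ≠ 0 := norm_ne_zero_iff.2 (sub_ne_zero.2 hy)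
  rw [inversionOfPower_sub, norm_smul, Real.norm_eq_abs, abs_div, abs_sq]
  field_simp

theorem inversionOfPower_inversionOfPower {x : E} {c : ℝ} (hc : c ≠ 0) {y : E} (hy : y ≠ x) :
    inversionOfPower x c (inversionOfPower x c y) = y := by
  have hyx : ‖y - x‖ ≠ 0 := norm_ne_zero_iff.2 (sub_ne_zero.2 hy)
  rw [inversionOfPower, norm_inversionOfPower_sub x c hy, inversionOfPower_sub, smul_smul, div_pow,
    sq_abs, show c / (c ^ 2 / ‖y - x‖ ^ 2) * (c / ‖y - x‖ ^ 2) = 1 by field_simp, one_smul,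
    add_sub_cancel]

end NormedSpace

variable [InnerProductSpace ℝ E]

theorem dist_inversionOfPower (x : E) (c : ℝ) {y z : E} (hy : y ≠ x) (hz : z ≠ x) :
    dist (inversionOfPower x c y) (inversionOfPower x c z)
      = |c| / (‖y - x‖ * ‖z - x‖) * dist y z := by
  have hscale (y : E) : inversionOfPower x c y = x + c • (1 / ‖y - x‖) ^ 2 • (y - x) := by
    rw [inversionOfPower, smul_smul, one_div_pow, mul_one_div]
  rw [hscale, hscale, dist_add_left, dist_smul₀, Real.norm_eq_abs,
    dist_div_norm_sq_smul (sub_ne_zero.2 hy) (sub_ne_zero.2 hz), dist_sub_right, one_pow,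
    ← mul_assoc, mul_one_div]

theorem norm_inversionOfPower (x y : E) :
    ‖inversionOfPower x (‖x‖ ^ 2 - ‖y‖ ^ 2) y‖ = ‖y‖ := by
  obtain rfl | hy := eq_or_ne y x
  · simp [inversionOfPower]
  have hyx : ‖y - x‖ ≠ 0 := norm_ne_zero_iff.2 (sub_ne_zero.2 hy)
  have hnorm : ‖y‖ ^ 2 = ‖x‖ ^ 2 + 2 * inner ℝ x (y - x) + ‖y - x‖ ^ 2 := by
    rw [← norm_add_sq_real, add_sub_cancel]
  rw [← sq_eq_sq₀ (norm_nonneg _) (norm_nonneg _), inversionOfPower, norm_add_sq_real,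
    real_inner_smul_right, norm_smul, mul_pow, Real.norm_eq_abs, sq_abs]
  field_simp
  linear_combination (-1 : ℝ) * (‖x‖ ^ 2 - ‖y‖ ^ 2) * hnorm

theorem mapsTo_inversionOfPower_sphere (x : E) (R : ℝ) :
    MapsTo (inversionOfPower x (‖x‖ ^ 2 - R ^ 2)) (sphere 0 R) (sphere 0 R) := by
  intro y hy
  rw [mem_sphere_zero_iff_norm] at hy ⊢
  rw [← hy, norm_inversionOfPower]

theorem isMoebiusInvolution_inversionOfPower {x : E} {R : ℝ} (hR : 0 < R) (hx : ‖x‖ ≠ R) :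
    IsMoebiusInvolution (mapsTo_inversionOfPower_sphere x R).restrict
      fun p => conformalFactor x p := by
  have hne := ne_of_mem_sphere_of_norm_ne hx
  have hnorm (p : sphere (0 : E) R) : 0 < ‖(p : E) - x‖ := norm_pos_iff.2 (sub_ne_zero.2 (hne p))
  have hc : ‖x‖ ^ 2 - R ^ 2 ≠ 0 :=
    sub_ne_zero.2 fun h => hx ((sq_eq_sq₀ (norm_nonneg x) hR.le).1 h)
  have hcpos := abs_pos.2 hc
  refine ⟨fun p => Subtype.ext (inversionOfPower_inversionOfPower hc (hne p)), fun p => ?_,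
    fun p q => ?_, fun p => ?_⟩
  · rw [conformalFactor_eq_of_mem_sphere]
    exact div_pos hcpos (pow_pos (hnorm p) 2)
  · have hmean : √(conformalFactor x p * conformalFactor x q)
        = |‖x‖ ^ 2 - R ^ 2| / (‖(p : E) - x‖ * ‖(q : E) - x‖) := by
      rw [conformalFactor_eq_of_mem_sphere, conformalFactor_eq_of_mem_sphere, div_mul_div_comm,
        ← sq, ← mul_pow, ← div_pow, Real.sqrt_sq (by positivity)]
    rw [hmean]
    exact dist_inversionOfPower x _ (hne p) (hne q)
  · rw [conformalFactor_eq_of_mem_sphere, conformalFactor_eq_of_mem_sphere,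
      MapsTo.val_restrict_apply, norm_inversionOfPower_sub x _ (hne p)]
    have := hnorm p
    field_simp

end Inversion

theorem main_theorem_statement_B_general {E : Type*} [NormedAddCommGroup E]
    [InnerProductSpace ℝ E] [MeasurableSpace E] [BorelSpace E] {k : ℕ}
    [Fact (finrank ℝ E = k + 1)] (hk : 1 ≤ k) {R : ℝ} (hR : 0 < R) {x : E} (hx₀ : x ≠ 0)
    (hx : ‖x‖ ≠ R) {α β : ℝ}
    (h : ∫ y in sphere 0 R, conformalFactor x y ^ α ∂μH[k]
      = ∫ y in sphere 0 R, conformalFactor x y ^ β ∂μH[k]) :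
    α + β = k ∨ α = β := by
  have hkpos : (0 : ℝ) < k := Nat.cast_pos.2 hk
  have : FiniteDimensional ℝ E := .of_fact_finrank_eq_succ k
  have := isFiniteMeasure_hausdorffMeasure_sphere (E := E) (k := k) hR
  have := isOpenPosMeasure_hausdorffMeasure_sphere (E := E) (k := k) hR
  have hT := isMoebiusInvolution_inversionOfPower hR hx
  have hcont := continuous_conformalFactor_sphere hx
  obtain ⟨p, hp⟩ := exists_one_lt_conformalFactor hR hx₀ hx
  simp only [setIntegral_hausdorffMeasure_eq_integral_subtype hkpos.le
    isClosed_sphere.measurableSet] at h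
  exact add_eq_or_eq_of_integral_rpow_eq hcont hT.factor_pos (hT.integral_rpow_sub hcont hkpos)
    hp.ne' h

/-- Main Theorem, Statement (B): for real `α, β`, equality of the integrals
`∫_{S^k(R)} ω^α = ∫_{S^k(R)} ω^β` implies `α + β = k` or `α = β`. -/
theorem main_theorem_statement_B
    (k : ℕ) (hk : 1 ≤ k) (R : ℝ) (hR : 0 < R)
    (x : EuclideanSpace ℝ (Fin (k + 1))) (hx0 : 0 < ‖x‖) (hx : ‖x‖ ≠ R)
    (α β : ℝ)
    (h : ∫ y in Metric.sphere (0 : EuclideanSpace ℝ (Fin (k + 1))) R,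
          (|‖x‖ ^ 2 - ‖y‖ ^ 2| / ‖x - y‖ ^ 2) ^ α ∂μH[k]
        = ∫ y in Metric.sphere (0 : EuclideanSpace ℝ (Fin (k + 1))) R,
          (|‖x‖ ^ 2 - ‖y‖ ^ 2| / ‖x - y‖ ^ 2) ^ β ∂μH[k]) :
    α + β = k ∨ α = β := by
  have : Fact (finrank ℝ (EuclideanSpace ℝ (Fin (k + 1))) = k + 1) :=
    ⟨finrank_euclideanSpace_fin⟩
  exact main_theorem_statement_B_general hk hR (norm_pos_iff.1 hx0) hx h
end
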